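/- Let C₁,…,C_d be a strongly separated family of nonempty compact sets in ℝ^d whose union is affinely spanning (the affine span of C₁ ∪ ⋯ ∪ C_d is all of ℝ^d), and let A ⊔ B = {1,…,d} be a partition. Then there exist exactly two pairs (u,α) with ‖u‖ = 1 such that for every i, the hyperplane H_{u,α} = {x : ⟨u,x⟩ = α} satisfies H_{u,α} ∩ Cᵢ ≠ ∅, and Cᵢ ⊆ {x : ⟨u,x⟩ ≥ α} if i ∈ A while Cᵢ ⊆ {x : ⟨u,x⟩ ≤ α} if i ∈ B. -/

import Mathlib

open scoped InnerProductSpace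

/-- A family of sets in `ℝ^d` is strongly separated if every subset of indices can be
strictly separated from its complement by an affine hyperplane. -/
def StronglySeparated {d m : ℕ} (S : Fin m → Set (EuclideanSpace ℝ (Fin d))) : Prop :=
  ∀ I : Finset (Fin m), ∃ (u : EuclideanSpace ℝ (Fin d)) (α : ℝ), u ≠ 0 ∧
    (∀ i ∈ I, ∀ x ∈ S i, ⟪u, x⟫_ℝ < α) ∧ (∀ i, i ∉ I → ∀ x ∈ S i, α < ⟪u, x⟫_ℝ)

/-!
Homogenizing `ℝ^d` to `ℝ^d × ℝ` and reflecting the sets of one class of the partition turns strong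
separation into the existence of linear functionals with arbitrary signs on the sets, and the
tangent hyperplanes into common supporting hyperplanes on the nonnegative side. Choosing a point in
each set always gives independent vectors, so a hyperplane through one point of each set has an
orientation that is constant under continuous deformation. Deforming the normal `v` into `-v'`
shows that two transversal hyperplanes of equal orientation whose normals `v`, `v'` never have
opposite signs at each other's contact points coincide. This gives uniqueness in each orientation
directly. For existence, fix the contact points in all sets but one: if `v x` is the normal
supporting the already treated sets and passing through `x` in the remaining set, the deformation
principle makes `⟪v y, x⟫ ≤ 0` a total preorder in `x` and `y`, and compactness provides an extremal
`x`, at which `v x` supports the last set too. The two orientations give the two hyperplanes.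
-/

section

open Set Module Topology Pointwise

variable {ι F : Type*} [NormedAddCommGroup F] [InnerProductSpace ℝ F] {K : ι → Set F} {v w : F}
  {n : ℕ}

/-- The linear analogue of strong separation: every assignment of signs to the members of the family
is realised strictly by some linear functional `⟪w, ·⟫`. -/
def SignSeparated (K : ι → Set F) : Prop :=
  ∀ I : Set ι, ∃ w : F, (∀ i ∈ I, ∀ x ∈ K i, 0 < ⟪w, x⟫_ℝ) ∧ ∀ i ∉ I, ∀ x ∈ K i, ⟪w, x⟫_ℝ < 0

/-- `v` is the inner normal of a linear hyperplane that supports every member of the family, with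
all of them on its nonnegative side. The vector `v = 0` is not excluded. -/
def IsCommonSupport (K : ι → Set F) (v : F) : Prop :=
  ∀ i, (∃ x ∈ K i, ⟪v, x⟫_ℝ = 0) ∧ ∀ y ∈ K i, 0 ≤ ⟪v, y⟫_ℝ

theorem inner_eq_zero_of_sameRay {x : F} (hvw : SameRay ℝ v w) (hv : v ≠ 0)
    (hvx : ⟪v, x⟫_ℝ = 0) : ⟪w, x⟫_ℝ = 0 := by
  obtain ⟨c, -, rfl⟩ := hvw.exists_nonneg_left hv
  rw [real_inner_smul_left, hvx, mul_zero]

theorem inner_nonneg_of_sameRay {x : F} (hvw : SameRay ℝ v w) (hv : v ≠ 0)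
    (hvx : 0 ≤ ⟪v, x⟫_ℝ) : 0 ≤ ⟪w, x⟫_ℝ := by
  obtain ⟨c, hc, rfl⟩ := hvw.exists_nonneg_left hv
  rw [real_inner_smul_left]
  exact mul_nonneg hc hvx

theorem inner_nonpos_of_sameRay {x : F} (hvw : SameRay ℝ v w) (hv : v ≠ 0)
    (hvx : ⟪v, x⟫_ℝ ≤ 0) : ⟪w, x⟫_ℝ ≤ 0 := by
  have h := inner_nonneg_of_sameRay (x := -x) hvw hv
  simp only [inner_neg_right, neg_nonneg] at h
  exact h hvx

theorem SignSeparated.smul (hK : SignSeparated K) {ε : ι → ℝ} (hε : ∀ i, ε i ≠ 0) :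
    SignSeparated fun i => ε i • K i := by
  intro I
  obtain ⟨w, hpos, hneg⟩ := hK {i | i ∈ I ↔ 0 < ε i}
  refine ⟨w, fun i hi => ?_, fun i hi => ?_⟩ <;> rintro _ ⟨x, hx, rfl⟩ <;>
    simp only [inner_smul_right] <;> rcases (hε i).lt_or_gt with h | h
  · exact mul_pos_of_neg_of_neg h (hneg i (by simp [hi, h.le]) x hx)
  · exact mul_pos h (hpos i (by simp [hi, h]) x hx)
  · exact mul_neg_of_neg_of_pos h (hpos i (by simp [hi, h.le]) x hx)
  · exact mul_neg_of_pos_of_neg h (hneg i (by simp [hi, h]) x hx)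

-- In a vanishing combination, the functional taking the signs of the coefficients makes every
-- term nonnegative.
theorem SignSeparated.linearIndependent [Finite ι] (hK : SignSeparated K) {x : ι → F}
    (hx : ∀ i, x i ∈ K i) : LinearIndependent ℝ x := by
  have := Fintype.ofFinite ι
  refine Fintype.linearIndependent_iff.2 fun c hc i => ?_
  obtain ⟨w, hpos, hneg⟩ := hK {i | 0 ≤ c i}
  have hterm : ∀ i, 0 ≤ c i * ⟪w, x i⟫_ℝ := fun i => by
    by_cases hi : 0 ≤ c i
    · exact mul_nonneg hi (hpos i hi _ (hx i)).le
    · exact mul_nonneg_of_nonpos_of_nonpos (not_le.1 hi).le (hneg i hi _ (hx i)).le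
  have hsum : ∑ i, c i * ⟪w, x i⟫_ℝ = 0 := by
    simpa only [inner_sum, inner_smul_right, inner_zero_right] using congrArg (inner ℝ w) hc
  have hw : ⟪w, x i⟫_ℝ ≠ 0 := by
    by_cases hi : 0 ≤ c i
    · exact (hpos i hi _ (hx i)).ne'
    · exact (hneg i hi _ (hx i)).ne
  have hzero : c i * ⟪w, x i⟫_ℝ = 0 :=
    congrFun ((Fintype.sum_eq_zero_iff_of_nonneg hterm).1 hsum) i
  exact (mul_eq_zero.1 hzero).resolve_right hw

theorem inner_nonneg_of_mem_closedConvexHull {C : Set F} (h : ∀ x ∈ C, 0 ≤ ⟪w, x⟫_ℝ) {x : F}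
    (hx : x ∈ closedConvexHull ℝ C) : 0 ≤ ⟪w, x⟫_ℝ :=
  closedConvexHull_min (t := {x | 0 ≤ ⟪w, x⟫_ℝ}) h
    (convex_halfSpace_ge (innerₗ F w).isLinear 0)
    (isClosed_le continuous_const (by fun_prop)) hx

theorem inner_pos_of_mem_closedConvexHull {C : Set F} (hC : IsCompact C)
    (h : ∀ x ∈ C, 0 < ⟪w, x⟫_ℝ) {x : F} (hx : x ∈ closedConvexHull ℝ C) : 0 < ⟪w, x⟫_ℝ := by
  have hne : C.Nonempty := by
    rw [closedConvexHull_eq_closure_convexHull] at hx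
    exact convexHull_nonempty_iff.1 (closure_nonempty_iff.1 ⟨x, hx⟩)
  obtain ⟨x₀, hx₀, hmin⟩ := hC.exists_isMinOn hne (f := fun x => ⟪w, x⟫_ℝ) (by fun_prop)
  have hsub : closedConvexHull ℝ C ⊆ {x | ⟪w, x₀⟫_ℝ ≤ ⟪w, x⟫_ℝ} :=
    closedConvexHull_min hmin (convex_halfSpace_ge (innerₗ F w).isLinear _)
      (isClosed_le continuous_const (by fun_prop))
  exact (h x₀ hx₀).trans_le (hsub hx)

theorem SignSeparated.closedConvexHull (hK : SignSeparated K) (hcomp : ∀ i, IsCompact (K i)) :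
    SignSeparated fun i => closedConvexHull ℝ (K i) := by
  intro I
  obtain ⟨w, hpos, hneg⟩ := hK I
  refine ⟨w, fun i hi x hx => inner_pos_of_mem_closedConvexHull (hcomp i) (hpos i hi) hx,
    fun i hi x hx => ?_⟩
  simpa using inner_pos_of_mem_closedConvexHull (w := -w) (hcomp i) (by simpa using hneg i hi) hx

theorem isCommonSupport_closedConvexHull_iff (hcomp : ∀ i, IsCompact (K i)) :
    IsCommonSupport (fun i => closedConvexHull ℝ (K i)) v ↔ IsCommonSupport K v := by
  refine forall_congr' fun i => ⟨?_, ?_⟩ <;> rintro ⟨⟨x, hx, hvx⟩, hnonneg⟩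
  · have hK : ∀ y ∈ K i, 0 ≤ ⟪v, y⟫_ℝ := fun y hy => hnonneg y (subset_closedConvexHull hy)
    refine ⟨by_contra fun hcon => ?_, hK⟩
    push Not at hcon
    exact (inner_pos_of_mem_closedConvexHull (hcomp i)
      (fun y hy => (hK y hy).lt_of_ne' (hcon y hy)) hx).ne' hvx
  · exact ⟨⟨x, subset_closedConvexHull hx, hvx⟩,
      fun y hy => inner_nonneg_of_mem_closedConvexHull hnonneg hy⟩

theorem isCompact_closedConvexHull {V : Type*} [NormedAddCommGroup V] [NormedSpace ℝ V]
    [FiniteDimensional ℝ V] {C : Set V} (hC : IsCompact C) :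
    IsCompact (closedConvexHull ℝ C) := by
  have := FiniteDimensional.proper ℝ V
  rw [closedConvexHull_eq_closure_convexHull]
  exact (isBounded_convexHull.2 hC.isBounded).isCompact_closure

theorem IsCommonSupport.of_sameRay (h : IsCommonSupport K v) (hv : v ≠ 0)
    (hvw : SameRay ℝ v w) : IsCommonSupport K w := by
  intro i
  obtain ⟨⟨x, hx, hvx⟩, hnonneg⟩ := h i
  exact ⟨⟨x, hx, inner_eq_zero_of_sameRay hvw hv hvx⟩,
    fun y hy => inner_nonneg_of_sameRay hvw hv (hnonneg y hy)⟩

theorem exists_continuousAlternatingMap_ne_zero (hF : finrank ℝ F = n + 1) :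
    ∃ ω : F [⋀^Fin (n + 1)]→L[ℝ] ℝ, ω ≠ 0 := by
  have : Fact (finrank ℝ F = n + 1) := ⟨hF⟩
  have := Module.finite_of_finrank_eq_succ hF
  let b := (stdOrthonormalBasis ℝ F).reindex (finCongr hF)
  let o : Orientation ℝ F (Fin (n + 1)) := b.toBasis.orientation
  refine ⟨o.volumeForm.mkContinuous 1 (by simpa using o.abs_volumeForm_apply_le), fun h => ?_⟩
  have hb : o.volumeForm b = 0 := DFunLike.congr_fun h (b : Fin (n + 1) → F)
  simpa [hb] using o.abs_volumeForm_apply_of_orthonormal b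

theorem apply_ne_zero_of_linearIndependent {𝕜 V κ : Type*} [Field 𝕜] [AddCommGroup V]
    [Module 𝕜 V] [Fintype κ] [Nonempty κ] {ω : V [⋀^κ]→ₗ[𝕜] 𝕜} (hω : ω ≠ 0)
    (hV : Fintype.card κ = finrank 𝕜 V) {b : κ → V} (hb : LinearIndependent 𝕜 b) : ω b ≠ 0 := by
  classical
  simpa using (ω.map_basis_ne_zero_iff (basisOfLinearIndependentOfCardEqFinrank hb hV)).2 hω

-- With `a = ⟪v, x'⟫` and `b = ⟪v', x⟫`, the equation says that the point `(1 - σ t) • x + σ t • x'`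
-- lies on the hyperplane with normal `(1 - t) • v - t • v'`, when `⟪v, x⟫ = ⟪v', x'⟫ = 0`.
theorem exists_continuousOn_balance {a b : ℝ} (hab : 0 ≤ a * b) :
    ∃ σ : ℝ → ℝ, ContinuousOn σ (Icc 0 1) ∧ (∀ t ∈ Icc (0 : ℝ) 1, σ t ∈ Icc (0 : ℝ) 1) ∧
      ∀ t ∈ Icc (0 : ℝ) 1, (1 - t) * (σ t * a) = t * ((1 - σ t) * b) := by
  rcases hab.eq_or_lt with hzero | hpos
  · rcases mul_eq_zero.1 hzero.symm with rfl | rfl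
    · exact ⟨fun _ => 1, continuousOn_const, by simp, by simp⟩
    · exact ⟨fun _ => 0, continuousOn_const, by simp, by simp⟩
  have ha : 0 < a ^ 2 := sq_pos_of_ne_zero (left_ne_zero_of_mul hpos.ne')
  have hden : ∀ t ∈ Icc (0 : ℝ) 1, 0 < (1 - t) * a ^ 2 + t * (a * b) := fun t ht => by
    rcases ht.1.eq_or_lt with rfl | h0
    · simpa using ha
    · exact add_pos_of_nonneg_of_pos (mul_nonneg (sub_nonneg.2 ht.2) ha.le) (mul_pos h0 hpos)
  refine ⟨fun t => t * (a * b) / ((1 - t) * a ^ 2 + t * (a * b)),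
    ContinuousOn.div (by fun_prop) (by fun_prop) fun t ht => (hden t ht).ne', fun t ht =>
    ⟨div_nonneg (mul_nonneg ht.1 hpos.le) (hden t ht).le, (div_le_one (hden t ht)).2 ?_⟩,
    fun t ht => ?_⟩
  · exact le_add_of_nonneg_left (mul_nonneg (sub_nonneg.2 ht.2) ha.le)
  · rw [one_sub_div (hden t ht).ne']
    ring

theorem exists_ne_zero_forall_inner_eq_zero (hF : finrank ℝ F = n + 1) (x : Fin n → F) :
    ∃ v : F, v ≠ 0 ∧ ∀ i, ⟪v, x i⟫_ℝ = 0 := by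
  have := Module.finite_of_finrank_eq_succ hF
  have hne : (Submodule.span ℝ (range x))ᗮ ≠ ⊥ := fun hbot => by
    have hle := finrank_range_le_card (R := ℝ) x
    rw [Set.finrank, Submodule.orthogonal_eq_bot_iff.1 hbot, finrank_top, hF,
      Fintype.card_fin] at hle
    exact n.not_succ_le_self hle
  obtain ⟨v, hv, hv0⟩ := Submodule.exists_mem_ne_zero_of_ne_bot hne
  exact ⟨v, hv0, fun i =>
    Submodule.inner_left_of_mem_orthogonal (Submodule.subset_span (mem_range_self i)) hv⟩

section VariationalInequality

variable {C : Set F} {v : F → F}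

-- At the point `p` of the segment from `y` to `x` where `v z` vanishes, `v p` is a positive
-- multiple of `v z`, and then `v y` is a positive multiple of `v p`.
theorem inner_nonpos_trans (hconv : Convex ℝ C) (hv : ∀ x ∈ C, v x ≠ 0)
    (hself : ∀ x ∈ C, ⟪v x, x⟫_ℝ = 0)
    (hray : ∀ x ∈ C, ∀ y ∈ C, 0 ≤ ⟪v x, y⟫_ℝ * ⟪v y, x⟫_ℝ → SameRay ℝ (v x) (v y))
    {y z : F} (hy : y ∈ C) (hz : z ∈ C) (hzy : ⟪v z, y⟫_ℝ ≤ 0) {x : F} (hx : x ∈ C)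
    (hyx : ⟪v y, x⟫_ℝ ≤ 0) : ⟪v z, x⟫_ℝ ≤ 0 := by
  by_contra! hzx
  obtain ⟨p, hp, hzp⟩ : ∃ p ∈ segment ℝ y x, ⟪v z, p⟫_ℝ = 0 :=
    (convex_segment y x).isPreconnected.intermediate_value (left_mem_segment ℝ y x)
      (right_mem_segment ℝ y x) (f := fun p => ⟪v z, p⟫_ℝ) (by fun_prop) ⟨hzy, hzx.le⟩
  have hpC : p ∈ C := hconv.segment_subset hy hx hp
  have hzp_ray : SameRay ℝ (v z) (v p) := hray z hz p hpC (by rw [hzp, zero_mul])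
  have hpy : ⟪v p, y⟫_ℝ ≤ 0 := inner_nonpos_of_sameRay hzp_ray (hv z hz) hzy
  have hyp : ⟪v y, p⟫_ℝ ≤ 0 :=
    ((convex_halfSpace_le (innerₗ F (v y)).isLinear 0).segment_subset (hself y hy).le hyx) hp
  have hyp_ray : SameRay ℝ (v y) (v p) := hray y hy p hpC (mul_nonneg_of_nonpos_of_nonpos hyp hpy)
  have hyz_ray : SameRay ℝ (v y) (v z) :=
    hyp_ray.trans hzp_ray.symm fun h => absurd h (hv p hpC)
  exact hzx.not_ge (inner_nonpos_of_sameRay hyz_ray (hv y hy) hyx)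

theorem exists_forall_inner_nonneg (hcomp : IsCompact C) (hconv : Convex ℝ C) (hne : C.Nonempty)
    (hv : ∀ x ∈ C, v x ≠ 0) (hself : ∀ x ∈ C, ⟪v x, x⟫_ℝ = 0)
    (hray : ∀ x ∈ C, ∀ y ∈ C, 0 ≤ ⟪v x, y⟫_ℝ * ⟪v y, x⟫_ℝ → SameRay ℝ (v x) (v y)) :
    ∃ x ∈ C, ∀ y ∈ C, 0 ≤ ⟪v x, y⟫_ℝ := by
  have hzero : ∀ x ∈ C, ∀ y ∈ C, 0 ≤ ⟪v x, y⟫_ℝ * ⟪v y, x⟫_ℝ → ⟪v x, y⟫_ℝ = 0 :=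
    fun x hx y hy h => inner_eq_zero_of_sameRay (hray x hx y hy h).symm (hv y hy) (hself y hy)
  let M : C → Set F := fun y => C ∩ {x | ⟪v y, x⟫_ℝ ≤ 0}
  have hclosed : ∀ y : C, IsClosed {x | ⟪v y, x⟫_ℝ ≤ 0} := fun y =>
    isClosed_le (by fun_prop) continuous_const
  have hsub : ∀ y z : C, ⟪v z, y⟫_ℝ ≤ 0 → M y ⊆ M z := fun y z hzy x hx =>
    ⟨hx.1, inner_nonpos_trans hconv hv hself hray y.2 z.2 hzy hx.1 hx.2⟩
  have hdir : Directed (· ⊇ ·) M := by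
    intro y z
    rcases le_or_gt ⟪v z, y⟫_ℝ 0 with hzy | hzy
    · exact ⟨y, subset_rfl, hsub y z hzy⟩
    rcases le_or_gt ⟪v y, z⟫_ℝ 0 with hyz | hyz
    · exact ⟨z, hsub z y hyz, subset_rfl⟩
    exact absurd (hzero z z.2 y y.2 (mul_pos hzy hyz).le) hzy.ne'
  have : Nonempty C := hne.to_subtype
  obtain ⟨x, hx⟩ := IsCompact.nonempty_iInter_of_directed_nonempty_isCompact_isClosed M hdir
    (fun y => ⟨y, y.2, (hself y y.2).le⟩) (fun y => hcomp.inter_right (hclosed y))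
    (fun y => hcomp.isClosed.inter (hclosed y))
  have hxM : ∀ y : C, x ∈ M y := mem_iInter.1 hx
  have hxC : x ∈ C := (hxM ⟨_, hne.some_mem⟩).1
  refine ⟨x, hxC, fun y hy => ?_⟩
  by_contra! hneg
  exact hneg.ne (hzero x hxC y hy (mul_nonneg_of_nonpos_of_nonpos hneg.le (hxM ⟨y, hy⟩).2))

end VariationalInequality

section Transversal

variable {K : Fin n → Set F} {ω : F [⋀^Fin (n + 1)]→L[ℝ] ℝ}

/-- The linear hyperplane with normal `v` meets every `K i`, namely in `x i`, and the frame
`(v, x 0, …, x (n - 1))` is positively oriented for the volume form `ω`. -/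
structure IsOrientedTransversal (ω : F [⋀^Fin (n + 1)]→L[ℝ] ℝ) (K : Fin n → Set F) (v : F)
    (x : Fin n → F) : Prop where
  mem : ∀ i, x i ∈ K i
  inner_eq_zero : ∀ i, ⟪v, x i⟫_ℝ = 0
  pos : 0 < ω (Matrix.vecCons v x)

theorem SignSeparated.apply_vecCons_ne_zero (hK : SignSeparated K) (hω : ω ≠ 0)
    (hF : finrank ℝ F = n + 1) (hv : v ≠ 0) {x : Fin n → F} (hx : ∀ i, x i ∈ K i)
    (hvx : ∀ i, ⟪v, x i⟫_ℝ = 0) :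
    ω (Matrix.vecCons v x) ≠ 0 := by
  have hω' : ω.toAlternatingMap ≠ 0 :=
    fun h => hω (ContinuousAlternatingMap.toAlternatingMap_injective h)
  refine apply_ne_zero_of_linearIndependent hω' (by simp [hF])
    (linearIndependent_finCons.2 ⟨hK.linearIndependent hx, fun hspan => hv ?_⟩)
  have hle : Submodule.span ℝ (range x) ≤ LinearMap.ker (innerₗ F v) :=
    Submodule.span_le.2 (range_subset_iff.2 hvx)
  exact inner_self_eq_zero.1 (hle hspan)

theorem SignSeparated.pos_of_path (hK : SignSeparated K) (hF : finrank ℝ F = n + 1)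
    {u : ℝ → F} {p : ℝ → Fin n → F} (hu : ContinuousOn u (Icc 0 1))
    (hp : ContinuousOn p (Icc 0 1))
    (hu0 : ∀ t ∈ Icc (0 : ℝ) 1, u t ≠ 0) (hpK : ∀ t ∈ Icc (0 : ℝ) 1, ∀ i, p t i ∈ K i)
    (hup : ∀ t ∈ Icc (0 : ℝ) 1, ∀ i, ⟪u t, p t i⟫_ℝ = 0)
    (h0 : 0 < ω (Matrix.vecCons (u 0) (p 0))) : 0 < ω (Matrix.vecCons (u 1) (p 1)) := by
  have hω : ω ≠ 0 := by
    rintro rfl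
    exact h0.ne rfl
  by_contra! h1
  have hcont : ContinuousOn (fun t => ω (Matrix.vecCons (u t) (p t))) (Icc 0 1) :=
    ω.cont.comp_continuousOn (hu.matrixVecCons hp)
  obtain ⟨t, ht, hzero⟩ := intermediate_value_Icc' zero_le_one hcont ⟨h1, h0.le⟩
  exact hK.apply_vecCons_ne_zero hω hF (hu0 t ht) (hpK t ht) (hup t ht) hzero

theorem IsOrientedTransversal.ne_zero {x : Fin n → F}
    (h : IsOrientedTransversal ω K v x) : v ≠ 0 := by
  rintro rfl
  exact h.pos.ne' (ω.map_coord_zero 0 rfl)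

theorem IsOrientedTransversal.of_inner_eq_zero {x y : Fin n → F} (h : IsOrientedTransversal ω K v x)
    (hF : finrank ℝ F = n + 1) (hK : SignSeparated K) (hconv : ∀ i, Convex ℝ (K i))
    (hy : ∀ i, y i ∈ K i) (hvy : ∀ i, ⟪v, y i⟫_ℝ = 0) : IsOrientedTransversal ω K v y := by
  refine ⟨hy, hvy, ?_⟩
  have hpos := hK.pos_of_path (ω := ω) hF (u := fun _ => v) (p := AffineMap.lineMap x y)
    continuousOn_const AffineMap.lineMap_continuous.continuousOn (fun _ _ => h.ne_zero)
    (fun t ht i => ?_) (fun t _ i => ?_) (by simpa using h.pos)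
  · simpa using hpos
  · rw [AffineMap.pi_lineMap_apply]
    exact (hconv i).lineMap_mem (h.mem i) (hy i) ht
  · rw [AffineMap.pi_lineMap_apply, AffineMap.lineMap_apply_module, inner_add_right,
      real_inner_smul_right, real_inner_smul_right, h.inner_eq_zero, hvy]
    ring

-- Otherwise the transversal hyperplane can be moved continuously from `v` to `-v'`, which would
-- carry the orientation of `(v, x)` to the opposite of the orientation of `(v', x')`.
theorem IsOrientedTransversal.sameRay {v' : F} {x x' : Fin n → F}
    (h : IsOrientedTransversal ω K v x) (h' : IsOrientedTransversal ω K v' x')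
    (hF : finrank ℝ F = n + 1) (hK : SignSeparated K)
    (hconv : ∀ i, Convex ℝ (K i)) (hnonneg : ∀ i, 0 ≤ ⟪v, x' i⟫_ℝ * ⟪v', x i⟫_ℝ) :
    SameRay ℝ v v' := by
  by_contra hray
  choose σ hσ hσ01 hbal using fun i => exists_continuousOn_balance (hnonneg i)
  let u : ℝ → F := fun t => (1 - t) • v - t • v'
  let p : ℝ → Fin n → F := fun t i => (1 - σ i t) • x i + σ i t • x' i
  have hu0 : ∀ t ∈ Icc (0 : ℝ) 1, u t ≠ 0 := by
    refine fun t ht hut => hray ?_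
    rw [sub_eq_zero] at hut
    rcases ht.1.eq_or_lt with rfl | ht0
    · exact absurd (by simpa using hut) h.ne_zero
    rcases ht.2.eq_or_lt with rfl | ht1
    · exact absurd (by simpa using hut.symm) h'.ne_zero
    exact Or.inr (Or.inr ⟨1 - t, t, sub_pos.2 ht1, ht0, hut⟩)
  have hpK : ∀ t ∈ Icc (0 : ℝ) 1, ∀ i, p t i ∈ K i := fun t ht i =>
    hconv i (h.mem i) (h'.mem i) (sub_nonneg.2 (hσ01 i t ht).2) (hσ01 i t ht).1
      (sub_add_cancel _ _)
  have hup : ∀ t ∈ Icc (0 : ℝ) 1, ∀ i, ⟪u t, p t i⟫_ℝ = 0 := fun t ht i => by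
    simp only [u, p, inner_sub_left, inner_add_right, real_inner_smul_left,
      real_inner_smul_right, h.inner_eq_zero, h'.inner_eq_zero]
    linear_combination hbal i t ht
  have hstart : IsOrientedTransversal ω K v (p 0) :=
    h.of_inner_eq_zero hF hK hconv (hpK 0 (by simp)) (by simpa [u] using hup 0 (by simp))
  have hend : IsOrientedTransversal ω K v' (p 1) :=
    h'.of_inner_eq_zero hF hK hconv (hpK 1 (by simp)) (by simpa [u] using hup 1 (by simp))
  have hpos : 0 < ω (Matrix.vecCons (u 1) (p 1)) :=
    hK.pos_of_path hF (by fun_prop) (by fun_prop) hu0 hpK hup (by simpa [u] using hstart.pos)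
  have hneg : ω (Matrix.vecCons (u 1) (p 1)) = -ω (Matrix.vecCons v' (p 1)) := by
    simpa [u] using ω.map_vecCons_smul (p 1) (-1) v'
  linarith [hend.pos]

theorem SignSeparated.exists_isOrientedTransversal (hK : SignSeparated K) (hω : ω ≠ 0)
    (hF : finrank ℝ F = n + 1) {x : Fin n → F} (hx : ∀ i, x i ∈ K i) :
    ∃ v, IsOrientedTransversal ω K v x := by
  obtain ⟨v, hv, hvx⟩ := exists_ne_zero_forall_inner_eq_zero hF x
  rcases (hK.apply_vecCons_ne_zero hω hF hv hx hvx).lt_or_gt with hneg | hpos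
  · refine ⟨-v, hx, fun i => by rw [inner_neg_left, hvx, neg_zero], ?_⟩
    have hflip := ω.vecCons_smul x (-1) v
    rw [neg_one_smul, neg_one_smul] at hflip
    exact hflip ▸ neg_pos.2 hneg
  · exact ⟨v, hx, hvx, hpos⟩

theorem SignSeparated.exists_isOrientedTransversal_forall_inner_nonneg (hK : SignSeparated K)
    (hω : ω ≠ 0) (hF : finrank ℝ F = n + 1) (hcomp : ∀ i, IsCompact (K i))
    (hconv : ∀ i, Convex ℝ (K i)) (T : Finset (Fin n)) {x : Fin n → F} (hx : ∀ i, x i ∈ K i) :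
    ∃ v x', IsOrientedTransversal ω K v x' ∧ (∀ i ∉ T, x' i = x i) ∧
      ∀ i ∈ T, ∀ y ∈ K i, 0 ≤ ⟪v, y⟫_ℝ := by
  induction T using Finset.induction_on generalizing x with
  | empty =>
    obtain ⟨v, hv⟩ := hK.exists_isOrientedTransversal hω hF hx
    exact ⟨v, x, hv, fun _ _ => rfl, by simp⟩
  | insert j T hj ih =>
    have hupdate : ∀ p ∈ K j, ∀ i, Function.update x j p i ∈ K i := fun p hp =>
      (Function.forall_update_iff x fun i y => y ∈ K i).2 ⟨hp, fun i _ => hx i⟩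
    choose! v x' htrans hfix hnonneg using fun p hp => ih (hupdate p hp)
    have hxj : ∀ p ∈ K j, x' p j = p := fun p hp => by rw [hfix p hp j hj, Function.update_self]
    have hfix_ne : ∀ p ∈ K j, ∀ i ∉ T, i ≠ j → x' p i = x i := fun p hp i hi hij => by
      rw [hfix p hp i hi, Function.update_of_ne hij]
    obtain ⟨p, hp, hmin⟩ : ∃ p ∈ K j, ∀ q ∈ K j, 0 ≤ ⟪v p, q⟫_ℝ := by
      refine exists_forall_inner_nonneg (hcomp j) (hconv j) ⟨x j, hx j⟩
        (fun p hp => (htrans p hp).ne_zero)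
        (fun p hp => by simpa only [hxj p hp] using (htrans p hp).inner_eq_zero j)
        fun p hp q hq hpq => (htrans p hp).sameRay (htrans q hq) hF hK hconv fun i => ?_
      rcases eq_or_ne i j with rfl | hij
      · rwa [hxj p hp, hxj q hq]
      by_cases hi : i ∈ T
      · exact mul_nonneg (hnonneg p hp i hi _ ((htrans q hq).mem i))
          (hnonneg q hq i hi _ ((htrans p hp).mem i))
      · rw [hfix_ne q hq i hi hij, ← hfix_ne p hp i hi hij, (htrans p hp).inner_eq_zero, zero_mul]
    refine ⟨v p, x' p, htrans p hp, fun i hi => ?_, fun i hi => ?_⟩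
    · rw [Finset.mem_insert, not_or] at hi
      exact hfix_ne p hp i hi.2 hi.1
    · rcases Finset.mem_insert.1 hi with rfl | hi
      · exact hmin
      · exact hnonneg p hp i hi

theorem IsCommonSupport.sameRay_of_isOrientedTransversal {x y : Fin n → F}
    (hv : IsCommonSupport K v) (hw : IsCommonSupport K w) (hvx : IsOrientedTransversal ω K v x)
    (hwy : IsOrientedTransversal ω K w y) (hF : finrank ℝ F = n + 1) (hK : SignSeparated K)
    (hconv : ∀ i, Convex ℝ (K i)) : SameRay ℝ v w :=
  hvx.sameRay hwy hF hK hconv fun i =>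
    mul_nonneg ((hv i).2 _ (hwy.mem i)) ((hw i).2 _ (hvx.mem i))

theorem SignSeparated.exists_isCommonSupport_isOrientedTransversal (hK : SignSeparated K)
    (hω : ω ≠ 0) (hF : finrank ℝ F = n + 1) (hcomp : ∀ i, IsCompact (K i))
    (hconv : ∀ i, Convex ℝ (K i)) (hne : ∀ i, (K i).Nonempty) :
    ∃ v x, IsCommonSupport K v ∧ IsOrientedTransversal ω K v x := by
  obtain ⟨v, x, hvx, -, hnonneg⟩ := hK.exists_isOrientedTransversal_forall_inner_nonneg hω hF
    hcomp hconv Finset.univ fun i => (hne i).some_mem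
  exact ⟨v, x, fun i => ⟨⟨x i, hvx.mem i, hvx.inner_eq_zero i⟩, hnonneg i (Finset.mem_univ i)⟩, hvx⟩

theorem IsOrientedTransversal.not_sameRay_of_neg {x y : Fin n → F}
    (hvx : IsOrientedTransversal ω K v x) (hwy : IsOrientedTransversal (-ω) K w y)
    (hF : finrank ℝ F = n + 1) (hK : SignSeparated K) (hconv : ∀ i, Convex ℝ (K i)) :
    ¬SameRay ℝ v w := by
  intro hray
  obtain ⟨c, hc, rfl⟩ := hray.exists_pos_left hvx.ne_zero hwy.ne_zero
  have hvy := hvx.of_inner_eq_zero hF hK hconv hwy.mem fun i =>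
    inner_eq_zero_of_sameRay hray.symm hwy.ne_zero (hwy.inner_eq_zero i)
  refine (mul_pos hc hvy.pos).not_gt ?_
  rw [← smul_eq_mul, ← ω.vecCons_smul]
  exact neg_pos.1 hwy.pos

theorem SignSeparated.exists_isCommonSupport_iff_of_convex (hK : SignSeparated K)
    (hF : finrank ℝ F = n + 1) (hcomp : ∀ i, IsCompact (K i)) (hconv : ∀ i, Convex ℝ (K i))
    (hne : ∀ i, (K i).Nonempty) :
    ∃ v w : F, v ≠ 0 ∧ w ≠ 0 ∧ ¬SameRay ℝ v w ∧
      ∀ u ≠ 0, IsCommonSupport K u ↔ SameRay ℝ u v ∨ SameRay ℝ u w := by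
  obtain ⟨ω, hω⟩ := exists_continuousAlternatingMap_ne_zero hF
  obtain ⟨v, x, hv, hvx⟩ :=
    hK.exists_isCommonSupport_isOrientedTransversal hω hF hcomp hconv hne
  obtain ⟨w, y, hw, hwy⟩ :=
    hK.exists_isCommonSupport_isOrientedTransversal (neg_ne_zero.2 hω) hF hcomp hconv hne
  refine ⟨v, w, hvx.ne_zero, hwy.ne_zero, hvx.not_sameRay_of_neg hwy hF hK hconv,
    fun u hu => ⟨fun hsupp => ?_, ?_⟩⟩
  · choose z hz huz using fun i => (hsupp i).1
    rcases (hK.apply_vecCons_ne_zero hω hF hu hz huz).lt_or_gt with hneg | hpos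
    · exact .inr (hsupp.sameRay_of_isOrientedTransversal hw ⟨hz, huz, neg_pos.2 hneg⟩ hwy hF hK
        hconv)
    · exact .inl (hsupp.sameRay_of_isOrientedTransversal hv ⟨hz, huz, hpos⟩ hvx hF hK hconv)
  · rintro (huv | huw)
    · exact hv.of_sameRay hvx.ne_zero huv.symm
    · exact hw.of_sameRay hwy.ne_zero huw.symm

theorem SignSeparated.exists_isCommonSupport_iff (hK : SignSeparated K)
    (hF : finrank ℝ F = n + 1) (hcomp : ∀ i, IsCompact (K i)) (hne : ∀ i, (K i).Nonempty) :
    ∃ v w : F, v ≠ 0 ∧ w ≠ 0 ∧ ¬SameRay ℝ v w ∧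
      ∀ u ≠ 0, IsCommonSupport K u ↔ SameRay ℝ u v ∨ SameRay ℝ u w := by
  have := Module.finite_of_finrank_eq_succ hF
  simpa only [isCommonSupport_closedConvexHull_iff hcomp] using
    (hK.closedConvexHull hcomp).exists_isCommonSupport_iff_of_convex hF
      (fun i => isCompact_closedConvexHull (hcomp i)) (fun _ => convex_closedConvexHull)
      fun i => (hne i).mono subset_closedConvexHull

end Transversal

section Homogenization

variable {E : Type*} [NormedAddCommGroup E] [InnerProductSpace ℝ E]

/-- The point `(x, -1)` of `E × ℝ`. The affine hyperplane `{x | ⟪u, x⟫ = α}` of `E` becomes the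
linear hyperplane with normal `(u, α)`. -/
def homogenize (x : E) : WithLp 2 (E × ℝ) :=
  WithLp.toLp 2 (x, -1)

theorem inner_homogenize (p : WithLp 2 (E × ℝ)) (x : E) :
    ⟪p, homogenize x⟫_ℝ = ⟪p.fst, x⟫_ℝ - p.snd := by
  simp [homogenize, WithLp.prod_inner_apply, sub_eq_add_neg]

theorem StronglySeparated.signSeparated {d m : ℕ} {C : Fin m → Set (EuclideanSpace ℝ (Fin d))}
    (hC : StronglySeparated C) : SignSeparated fun i => homogenize '' C i := by
  classical
  intro I
  obtain ⟨u, α, -, hlt, hgt⟩ := hC (Finset.univ.filter (· ∉ I))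
  refine ⟨WithLp.toLp 2 (u, α), fun i hi => ?_, fun i hi => ?_⟩ <;> rintro _ ⟨x, hx, rfl⟩ <;>
    rw [inner_homogenize]
  · exact sub_pos.2 (hgt i (by simpa using hi) x hx)
  · exact sub_neg.2 (hlt i (by simpa using hi) x hx)

variable [DecidableEq ι] {A : Finset ι} {C : ι → Set E}

/-- The homogenizations of the sets `C i`, reflected in the origin for `i ∉ A`, so that the two
sides of a hyperplane demanded by the partition `(A, Aᶜ)` become a single side. -/
def signedHomogenization (A : Finset ι) (C : ι → Set E) (i : ι) : Set (WithLp 2 (E × ℝ)) :=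
  (if i ∈ A then (1 : ℝ) else -1) • homogenize '' C i

theorem signSeparated_signedHomogenization (hC : SignSeparated fun i => homogenize '' C i) :
    SignSeparated (signedHomogenization A C) :=
  hC.smul fun i => by split_ifs <;> norm_num

theorem isCompact_signedHomogenization {i : ι} (hC : IsCompact (C i)) :
    IsCompact (signedHomogenization A C i) :=
  (hC.image (by unfold homogenize; fun_prop)).smul _

theorem isCommonSupport_signedHomogenization_iff {p : E × ℝ} :
    IsCommonSupport (signedHomogenization A C) (WithLp.toLp 2 p) ↔
      (∀ i, ({x | ⟪p.1, x⟫_ℝ = p.2} ∩ C i).Nonempty) ∧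
        (∀ a ∈ A, C a ⊆ {x | p.2 ≤ ⟪p.1, x⟫_ℝ}) ∧
        ∀ b ∉ A, C b ⊆ {x | ⟪p.1, x⟫_ℝ ≤ p.2} := by
  simp only [IsCommonSupport, signedHomogenization, ← image_smul, exists_mem_image,
    forall_mem_image, inner_smul_right, inner_homogenize, ← forall_and]
  refine forall_congr' fun i => ?_
  by_cases hi : i ∈ A <;>
    simp [hi, Set.Nonempty, Set.subset_def, sub_eq_zero, and_comm, -neg_sub]

theorem IsCommonSupport.fst_ne_zero [Nonempty ι] {p : WithLp 2 (E × ℝ)}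
    (h : IsCommonSupport (signedHomogenization A C) p) (hp : p ≠ 0) : p.fst ≠ 0 := by
  intro hfst
  have hmeet := (isCommonSupport_signedHomogenization_iff (p := p.ofLp).1 h).1
  obtain ⟨x, hx, -⟩ := hmeet (Classical.arbitrary ι)
  have hsnd : p.snd = 0 := by simpa [hfst] using hx.symm
  exact hp ((WithLp.ofLp_injective 2) (Prod.ext hfst hsnd))

theorem norm_fst_eq_one_and_sameRay_iff {p v : WithLp 2 (E × ℝ)} (hv : v.fst ≠ 0) :
    ‖p.fst‖ = 1 ∧ SameRay ℝ p v ↔ p = ‖v.fst‖⁻¹ • v := by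
  constructor
  · rintro ⟨hp, hray⟩
    have hp0 : p ≠ 0 := by
      rintro rfl
      simp at hp
    have hv0 : v ≠ 0 := by
      rintro rfl
      simp at hv
    obtain ⟨c, hc, rfl⟩ := hray.exists_pos_left hp0 hv0
    simp [norm_smul, hp, abs_of_pos hc, smul_smul, hc.ne']
  · rintro rfl
    refine ⟨by simp [norm_smul, hv], SameRay.sameRay_nonneg_smul_left v (by positivity)⟩

theorem encard_setOf_norm_eq_one_and_isCommonSupport (hn : 0 < n) (hE : finrank ℝ E = n)
    {A : Finset (Fin n)} {C : Fin n → Set E} (hcomp : ∀ i, IsCompact (C i))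
    (hne : ∀ i, (C i).Nonempty) (hC : SignSeparated fun i => homogenize '' C i) :
    {p : E × ℝ | ‖p.1‖ = 1 ∧
      IsCommonSupport (signedHomogenization A C) (WithLp.toLp 2 p)}.encard = 2 := by
  have : Nonempty (Fin n) := ⟨⟨0, hn⟩⟩
  have : FiniteDimensional ℝ E := .of_finrank_pos (hE ▸ hn)
  have hF : finrank ℝ (WithLp 2 (E × ℝ)) = n + 1 := by
    rw [(WithLp.linearEquiv 2 ℝ (E × ℝ)).finrank_eq, finrank_prod, finrank_self, hE]
  obtain ⟨v, w, hv, hw, hvw, hiff⟩ :=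
    (signSeparated_signedHomogenization (A := A) hC).exists_isCommonSupport_iff hF
      (fun i => isCompact_signedHomogenization (hcomp i))
      fun i => ((hne i).image homogenize).smul_set
  have hv1 : v.fst ≠ 0 := ((hiff v hv).2 (.inl .rfl)).fst_ne_zero hv
  have hw1 : w.fst ≠ 0 := ((hiff w hw).2 (.inr .rfl)).fst_ne_zero hw
  refine encard_eq_two.2 ⟨(‖v.fst‖⁻¹ • v).ofLp, (‖w.fst‖⁻¹ • w).ofLp, fun heq => hvw ?_, ?_⟩
  · have hray : SameRay ℝ (‖v.fst‖⁻¹ • v) w :=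
      ((norm_fst_eq_one_and_sameRay_iff hw1).2 (WithLp.ofLp_injective 2 heq)).2
    exact (SameRay.sameRay_pos_smul_right v (inv_pos.2 (norm_pos_iff.2 hv1))).trans hray
      fun h => absurd h (smul_ne_zero (inv_ne_zero (norm_ne_zero_iff.2 hv1)) hv)
  · ext p
    have hray : ∀ u : WithLp 2 (E × ℝ), u.fst ≠ 0 →
        (p = (‖u.fst‖⁻¹ • u).ofLp ↔ ‖p.1‖ = 1 ∧ SameRay ℝ (WithLp.toLp 2 p) u) := fun u hu =>
      (WithLp.equiv 2 (E × ℝ)).eq_symm_apply.symm.trans (norm_fst_eq_one_and_sameRay_iff hu).symm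
    rw [mem_ofPred_eq, mem_insert_iff, mem_singleton_iff, hray v hv1, hray w hw1, ← and_or_left]
    refine and_congr_right fun hp => hiff _ fun h0 => ?_
    simp [(WithLp.toLp_eq_zero 2).1 h0] at hp

end Homogenization

end

theorem compact_sets_per_partition_general {d : ℕ} (hd : 0 < d)
    (C : Fin d → Set (EuclideanSpace ℝ (Fin d)))
    (hcomp : ∀ i, IsCompact (C i)) (hne : ∀ i, (C i).Nonempty)
    (hsep : StronglySeparated C)
    (A B : Finset (Fin d)) (hdisj : Disjoint A B) (hunion : A ∪ B = Finset.univ) :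
    {p : EuclideanSpace ℝ (Fin d) × ℝ | ‖p.1‖ = 1 ∧
        (∀ i : Fin d, ({x | ⟪p.1, x⟫_ℝ = p.2} ∩ C i).Nonempty) ∧
        (∀ a ∈ A, C a ⊆ {x | p.2 ≤ ⟪p.1, x⟫_ℝ}) ∧
        (∀ b ∈ B, C b ⊆ {x | ⟪p.1, x⟫_ℝ ≤ p.2})}.encard = 2 := by
  have hB : ∀ b, b ∈ B ↔ b ∉ A := by
    simp [← (IsCompl.of_eq hdisj.eq_bot hunion).compl_eq]
  simpa only [isCommonSupport_signedHomogenization_iff, hB] using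
    encard_setOf_norm_eq_one_and_isCommonSupport (A := A) hd finrank_euclideanSpace_fin hcomp hne
      hsep.signSeparated

/-- For a strongly separated, affinely spanning family of `d` nonempty compact sets in
`ℝ^d` and a partition `A ⊔ B = [d]`, there are exactly two oriented hyperplanes `(u, α)`
tangent to every set, with the sets of `A` on the nonnegative side and the sets of `B` on
the nonpositive side. -/
theorem compact_sets_per_partition {d : ℕ}
    (C : Fin d → Set (EuclideanSpace ℝ (Fin d)))
    (hcomp : ∀ i, IsCompact (C i)) (hne : ∀ i, (C i).Nonempty)
    (hspan : affineSpan ℝ (⋃ i, C i) = ⊤)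
    (hsep : StronglySeparated C)
    (A B : Finset (Fin d)) (hdisj : Disjoint A B) (hunion : A ∪ B = Finset.univ) :
    {p : EuclideanSpace ℝ (Fin d) × ℝ | ‖p.1‖ = 1 ∧
        (∀ i : Fin d, ({x | ⟪p.1, x⟫_ℝ = p.2} ∩ C i).Nonempty) ∧
        (∀ a ∈ A, C a ⊆ {x | p.2 ≤ ⟪p.1, x⟫_ℝ}) ∧
        (∀ b ∈ B, C b ⊆ {x | ⟪p.1, x⟫_ℝ ≤ p.2})}.encard = 2 :=
  compact_sets_per_partition_general (Nat.pos_of_ne_zero (by rintro rfl; simp at hspan)) C hcomp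
    hne hsep A B hdisj hunion
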